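/- (Generalized adjoint method, Theorem 1.) Fix T > 0 and θ₀ ∈ ℝ^{p}. Let f : ℝ^{p} × ℝ × ℝⁿ → ℝⁿ, l : ℝ × ℝ^{p} × ℝⁿ → ℝ and L : ℝ × ℝ^{p} × ℝⁿ → ℝ be continuously differentiable. Let x : ℝ^{p} × [0,T] → ℝⁿ satisfy, for every θ near θ₀: (i) ∂_t x(θ, t) = f(θ, t, x(θ, t)) and x(θ, 0) = x₀ (independent of θ); (ii) the sensitivity S(θ, t) := D_θ x(θ, t) ∈ ℝ^{n×p} exists, is jointly continuous, is differentiable in t and satisfies the variational equation ∂_t S(θ, t) = D_x f(θ, t, x(θ, t)) S(θ, t) + D_θ f(θ, t, x(θ, t)) with S(θ, 0) = 0. Let λ : [0,T] → ℝⁿ be differentiable and solve the adjoint equation λ̇(t)ᵀ = −λ(t)ᵀ D_x f(θ₀, t, x(θ₀, t)) − D_x l(t, θ₀, x(θ₀, t)) with terminal condition λ(T)ᵀ = D_x L(T, θ₀, x(θ₀, T)). Define ℓ(θ) := ∫₀ᵀ l(τ, θ, x(θ, τ)) dτ + L(T, θ, x(θ, T)). Then ℓ is differentiable at θ₀ and dℓ/dθ(θ₀)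 = D_θ L(T, θ₀, x(θ₀, T)) + ∫₀ᵀ [ λ(τ)ᵀ D_θ f(θ₀, τ, x(θ₀, τ)) + D_θ l(τ, θ₀, x(θ₀, τ)) ] dτ. -/

import Mathlib

open Matrix

/-! The cost is differentiated under the integral sign. On a small closed ball around `θ₀` the
sensitivity `S` is bounded by compactness, so `x` is Lipschitz in `θ` uniformly in `t`, hence jointly
continuous (`exists_closedBall_continuousOn`); the `θ`-derivative of the integrand is then continuous
on a compact set, hence bounded, which is the domination required. This gives
`ℓ'(θ₀) v = D_θ L v + D_x L (S(T) v) + ∫ (D_θ l v + D_x l (S v))`.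

The adjoint and variational equations give
`d/dt (λᵀ S v) = -D_x l (S v) + λᵀ D_θ f v`. Since `S(0) = 0` and `λ(T)ᵀ = D_x L`, integrating over
`[0, T]` turns `D_x L (S(T) v)` into `∫ (-D_x l (S v) + λᵀ D_θ f v)`, which cancels every occurrence
of the sensitivity. -/

section Partial

variable {A B C F : Type*} [NormedAddCommGroup A] [NormedSpace ℝ A]
  [NormedAddCommGroup B] [NormedSpace ℝ B] [NormedAddCommGroup C] [NormedSpace ℝ C]
  [NormedAddCommGroup F] [NormedSpace ℝ F]

lemma fderiv_slot_fst {g : A × B × C → F} (hg : ContDiff ℝ 1 g) (a : A) (b : B) (c : C) (v : A) :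
    fderiv ℝ (fun y => g (y, b, c)) a v = fderiv ℝ g (a, b, c) (v, 0, 0) := by
  have h := HasFDerivAt.comp (g := g) (f := fun y => (y, b, c)) a
    (hg.differentiable (by simp) (a, b, c)).hasFDerivAt
    ((hasFDerivAt_id a).prodMk ((hasFDerivAt_const b a).prodMk (hasFDerivAt_const c a)))
  exact congrArg (fun D => D v) h.fderiv

lemma fderiv_slot_mid {g : A × B × C → F} (hg : ContDiff ℝ 1 g) (a : A) (b : B) (c : C) (v : B) :
    fderiv ℝ (fun y => g (a, y, c)) b v = fderiv ℝ g (a, b, c) (0, v, 0) := by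
  have h := HasFDerivAt.comp (g := g) (f := fun y => (a, y, c)) b
    (hg.differentiable (by simp) (a, b, c)).hasFDerivAt
    ((hasFDerivAt_const a b).prodMk ((hasFDerivAt_id b).prodMk (hasFDerivAt_const c b)))
  exact congrArg (fun D => D v) h.fderiv

lemma fderiv_slot_last {g : A × B × C → F} (hg : ContDiff ℝ 1 g) (a : A) (b : B) (c : C) (v : C) :
    fderiv ℝ (fun y => g (a, b, y)) c v = fderiv ℝ g (a, b, c) (0, 0, v) := by
  have h := HasFDerivAt.comp (g := g) (f := fun y => (a, b, y)) c
    (hg.differentiable (by simp) (a, b, c)).hasFDerivAt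
    ((hasFDerivAt_const a c).prodMk ((hasFDerivAt_const b c).prodMk (hasFDerivAt_id c)))
  exact congrArg (fun D => D v) h.fderiv

lemma continuous_fderiv_apply_const {g : A → F} (hg : ContDiff ℝ 1 g) (v : A) :
    Continuous (fun q => fderiv ℝ g q v) :=
  (hg.continuous_fderiv (by simp)).clm_apply continuous_const

end Partial

/-- A field of row vectors is continuous as soon as its pairing with each fixed vector is. -/
lemma continuous_of_dotProduct {X : Type*} [TopologicalSpace X] {m : ℕ} {r : X → Fin m → ℝ}
    (h : ∀ v, Continuous fun q => r q ⬝ᵥ v) : Continuous r :=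
  continuous_pi fun i => by simpa using h (Pi.single i 1)

/-- A field of matrices is continuous as soon as its action on each fixed vector is. -/
lemma continuous_of_mulVec {X : Type*} [TopologicalSpace X] {m k : ℕ}
    {M : X → Matrix (Fin m) (Fin k) ℝ}
    (h : ∀ v, Continuous fun q => M q *ᵥ v) : Continuous M :=
  continuous_matrix fun i j => by
    simpa [Function.comp_def] using (continuous_apply i).comp (h (Pi.single j 1))

/-- A matrix acting on column vectors, as a continuous linear map. -/
noncomputable def matCLM {m k : ℕ} :
    Matrix (Fin m) (Fin k) ℝ →ₗ[ℝ] ((Fin k → ℝ) →L[ℝ] (Fin m → ℝ)) :=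
  (LinearMap.toContinuousLinearMap.toLinearMap).comp (Matrix.toLin').toLinearMap

lemma continuous_matCLM {m k : ℕ} : Continuous (matCLM (m := m) (k := k)) :=
  LinearMap.continuous_of_finiteDimensional _

/-- A family `x θ t`, continuous in `t` and with a jointly continuous derivative in `θ`, is jointly
continuous on some closed ball around `θ₀` times `[0, T]`: by compactness and the mean value
inequality it is Lipschitz in `θ` uniformly in `t`. -/
lemma exists_closedBall_continuousOn {p n : ℕ} {T : ℝ} {θ₀ : Fin p → ℝ}
    {x : (Fin p → ℝ) → ℝ → (Fin n → ℝ)} {U : Set (Fin p → ℝ)} (hU : U ∈ nhds θ₀)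
    (hxt : ∀ θ ∈ U, ContinuousOn (x θ) (Set.Icc 0 T))
    {S : (Fin p → ℝ) → ℝ → Matrix (Fin n) (Fin p) ℝ}
    (hS : ∀ θ ∈ U, ∀ t ∈ Set.Icc (0:ℝ) T, HasFDerivAt (fun ϑ => x ϑ t) (matCLM (S θ t)) θ)
    (hScont : ContinuousOn (fun w : (Fin p → ℝ) × ℝ => S w.1 w.2) (U ×ˢ Set.Icc (0:ℝ) T)) :
    ∃ ε > 0, Metric.closedBall θ₀ ε ⊆ U ∧
      ContinuousOn (fun w : (Fin p → ℝ) × ℝ => x w.1 w.2)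
        (Metric.closedBall θ₀ ε ×ˢ Set.Icc (0:ℝ) T) := by
  obtain ⟨ε, hε, hεU⟩ := Metric.nhds_basis_closedBall.mem_iff.1 hU
  refine ⟨ε, hε, hεU, ?_⟩
  have hK : IsCompact (Metric.closedBall θ₀ ε ×ˢ Set.Icc (0:ℝ) T) :=
    (isCompact_closedBall _ _).prod isCompact_Icc
  obtain ⟨C, hC⟩ := hK.exists_bound_of_continuousOn
    (continuous_matCLM.comp_continuousOn (hScont.mono (Set.prod_mono_left hεU)))
  refine continuousOn_prod_of_continuousOn_lipschitzOnWith _ C.toNNReal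
    (fun θ hθ => hxt θ (hεU hθ)) fun t ht => ?_
  refine (convex_closedBall θ₀ ε).lipschitzOnWith_of_nnnorm_hasFDerivWithin_le
    (f' := fun θ => matCLM (S θ t))
    (fun θ hθ => (hS θ (hεU hθ) t ht).hasFDerivWithinAt) fun θ hθ => ?_
  rw [← NNReal.coe_le_coe, coe_nnnorm]
  exact (hC (θ, t) ⟨hθ, ht⟩).trans (Real.le_coe_toNNReal C)

/-- Chain rule for `g t θ (x θ t)` in the parameter `θ`. -/
lemma hasFDerivAt_along {p n : ℕ} {g : ℝ → (Fin p → ℝ) → (Fin n → ℝ) → ℝ}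
    (hg : ContDiff ℝ 1 (fun w : ℝ × (Fin p → ℝ) × (Fin n → ℝ) => g w.1 w.2.1 w.2.2))
    {y : (Fin p → ℝ) → (Fin n → ℝ)} {θ : Fin p → ℝ} {D : (Fin p → ℝ) →L[ℝ] (Fin n → ℝ)}
    (hy : HasFDerivAt y D θ) (t : ℝ) :
    HasFDerivAt (fun ϑ => g t ϑ (y ϑ))
      ((fderiv ℝ (fun w : ℝ × (Fin p → ℝ) × (Fin n → ℝ) => g w.1 w.2.1 w.2.2) (t, θ, y θ)).comp
        ((0 : (Fin p → ℝ) →L[ℝ] ℝ).prod ((ContinuousLinearMap.id ℝ _).prod D))) θ :=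
  HasFDerivAt.comp (g := fun w : ℝ × (Fin p → ℝ) × (Fin n → ℝ) => g w.1 w.2.1 w.2.2) θ
    (hg.differentiable (by simp) (t, θ, y θ)).hasFDerivAt
    ((hasFDerivAt_const t θ).prodMk ((hasFDerivAt_id θ).prodMk hy))

/-- The total derivative in the directions of `θ` and `z`, in terms of the two row gradients. -/
lemma fderiv_apply_eq_dotProduct {p n : ℕ} {g : ℝ → (Fin p → ℝ) → (Fin n → ℝ) → ℝ}
    (hg : ContDiff ℝ 1 (fun w : ℝ × (Fin p → ℝ) × (Fin n → ℝ) => g w.1 w.2.1 w.2.2))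
    {Dx : ℝ → (Fin p → ℝ) → (Fin n → ℝ) → (Fin n → ℝ)}
    (hDx : ∀ t θ z v, fderiv ℝ (fun y => g t θ y) z v = Dx t θ z ⬝ᵥ v)
    {Dθ : ℝ → (Fin p → ℝ) → (Fin n → ℝ) → (Fin p → ℝ)}
    (hDθ : ∀ t θ z v, fderiv ℝ (fun ϑ => g t ϑ z) θ v = Dθ t θ z ⬝ᵥ v)
    (t : ℝ) (θ v : Fin p → ℝ) (z u : Fin n → ℝ) :
    fderiv ℝ (fun w : ℝ × (Fin p → ℝ) × (Fin n → ℝ) => g w.1 w.2.1 w.2.2) (t, θ, z) (0, v, u)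
      = Dθ t θ z ⬝ᵥ v + Dx t θ z ⬝ᵥ u := by
  rw [← hDx, ← hDθ]
  have h1 := fderiv_slot_mid hg t θ z v
  have h2 := fderiv_slot_last hg t θ z u
  simp only at h1 h2
  rw [h1, h2, ← map_add]
  simp

/-- Generalized adjoint method (Theorem 1): for the parameter-dependent initial value
problem `ẋ = f(θ, t, x)`, `x(θ, 0) = x₀`, with sensitivity `S = D_θ x` satisfying the
variational equation, and adjoint state `λ` solving
`λ̇ᵀ = −λᵀ D_x f − D_x l`, `λ(T)ᵀ = D_x L(T, θ₀, x(θ₀,T))`, the cost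
`ℓ(θ) = ∫₀ᵀ l(τ, θ, x(θ,τ)) dτ + L(T, θ, x(θ,T))` is differentiable at `θ₀` with gradient
`dℓ/dθ = D_θ L + ∫₀ᵀ (λᵀ D_θ f + D_θ l) dτ`. -/
theorem generalized_adjoint_method {p n : ℕ}
    (T : ℝ) (hT : 0 < T) (θ₀ : Fin p → ℝ)
    (f : (Fin p → ℝ) → ℝ → (Fin n → ℝ) → (Fin n → ℝ))
    (l : ℝ → (Fin p → ℝ) → (Fin n → ℝ) → ℝ)
    (L : ℝ → (Fin p → ℝ) → (Fin n → ℝ) → ℝ)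
    (hf : ContDiff ℝ 1 (fun w : (Fin p → ℝ) × ℝ × (Fin n → ℝ) => f w.1 w.2.1 w.2.2))
    (hl : ContDiff ℝ 1 (fun w : ℝ × (Fin p → ℝ) × (Fin n → ℝ) => l w.1 w.2.1 w.2.2))
    (hL : ContDiff ℝ 1 (fun w : ℝ × (Fin p → ℝ) × (Fin n → ℝ) => L w.1 w.2.1 w.2.2))
    (Dxf : (Fin p → ℝ) → ℝ → (Fin n → ℝ) → Matrix (Fin n) (Fin n) ℝ)
    (hDxf : ∀ θ t z v, fderiv ℝ (fun y => f θ t y) z v = Dxf θ t z *ᵥ v)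
    (Dθf : (Fin p → ℝ) → ℝ → (Fin n → ℝ) → Matrix (Fin n) (Fin p) ℝ)
    (hDθf : ∀ θ t z v, fderiv ℝ (fun ϑ => f ϑ t z) θ v = Dθf θ t z *ᵥ v)
    (Dxl : ℝ → (Fin p → ℝ) → (Fin n → ℝ) → (Fin n → ℝ))
    (hDxl : ∀ t θ z v, fderiv ℝ (fun y => l t θ y) z v = Dxl t θ z ⬝ᵥ v)
    (Dθl : ℝ → (Fin p → ℝ) → (Fin n → ℝ) → (Fin p → ℝ))
    (hDθl : ∀ t θ z v, fderiv ℝ (fun ϑ => l t ϑ z) θ v = Dθl t θ z ⬝ᵥ v)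
    (DxL : ℝ → (Fin p → ℝ) → (Fin n → ℝ) → (Fin n → ℝ))
    (hDxL : ∀ t θ z v, fderiv ℝ (fun y => L t θ y) z v = DxL t θ z ⬝ᵥ v)
    (DθL : ℝ → (Fin p → ℝ) → (Fin n → ℝ) → (Fin p → ℝ))
    (hDθL : ∀ t θ z v, fderiv ℝ (fun ϑ => L t ϑ z) θ v = DθL t θ z ⬝ᵥ v)
    (x : (Fin p → ℝ) → ℝ → (Fin n → ℝ)) (x₀ : Fin n → ℝ)
    (U : Set (Fin p → ℝ)) (hU : U ∈ nhds θ₀)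
    (hode : ∀ θ ∈ U, ∀ t ∈ Set.Icc (0:ℝ) T, HasDerivAt (x θ) (f θ t (x θ t)) t)
    (hinit : ∀ θ ∈ U, x θ 0 = x₀)
    (S : (Fin p → ℝ) → ℝ → Matrix (Fin n) (Fin p) ℝ)
    (hSdiff : ∀ θ ∈ U, ∀ t ∈ Set.Icc (0:ℝ) T, DifferentiableAt ℝ (fun ϑ => x ϑ t) θ)
    (hSder : ∀ θ ∈ U, ∀ t ∈ Set.Icc (0:ℝ) T, ∀ v,
      fderiv ℝ (fun ϑ => x ϑ t) θ v = S θ t *ᵥ v)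
    (hScont : ContinuousOn (fun w : (Fin p → ℝ) × ℝ => S w.1 w.2) (U ×ˢ Set.Icc (0:ℝ) T))
    (hSvar : ∀ θ ∈ U, ∀ t ∈ Set.Icc (0:ℝ) T, ∀ i j,
      HasDerivAt (fun s => S θ s i j)
        ((Dxf θ t (x θ t) * S θ t + Dθf θ t (x θ t)) i j) t)
    (hS0 : ∀ θ ∈ U, S θ 0 = 0)
    (lam : ℝ → (Fin n → ℝ))
    (hlam : ∀ t ∈ Set.Icc (0:ℝ) T,
      HasDerivAt lam (-((Dxf θ₀ t (x θ₀ t))ᵀ *ᵥ lam t) - Dxl t θ₀ (x θ₀ t)) t)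
    (hlamT : lam T = DxL T θ₀ (x θ₀ T))
    (ℓ : (Fin p → ℝ) → ℝ)
    (hℓ : ℓ = fun θ => (∫ τ in (0:ℝ)..T, l τ θ (x θ τ)) + L T θ (x θ T)) :
    DifferentiableAt ℝ ℓ θ₀ ∧ ∀ v : Fin p → ℝ, fderiv ℝ ℓ θ₀ v =
      (DθL T θ₀ (x θ₀ T)
        + ∫ τ in (0:ℝ)..T, (lam τ ᵥ* Dθf θ₀ τ (x θ₀ τ) + Dθl τ θ₀ (x θ₀ τ))) ⬝ᵥ v := by
  have hSF : ∀ θ ∈ U, ∀ t ∈ Set.Icc (0:ℝ) T,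
      HasFDerivAt (fun ϑ => x ϑ t) (matCLM (S θ t)) θ := by
    intro θ hθ t ht
    have h := (hSdiff θ hθ t ht).hasFDerivAt
    have hD : fderiv ℝ (fun ϑ => x ϑ t) θ = matCLM (S θ t) :=
      ContinuousLinearMap.ext fun v => hSder θ hθ t ht v
    rwa [hD] at h
  have hxt : ∀ θ ∈ U, ContinuousOn (x θ) (Set.Icc 0 T) := fun θ hθ t ht =>
    (hode θ hθ t ht).continuousAt.continuousWithinAt
  obtain ⟨ε, hε, hεU, hxc⟩ := exists_closedBall_continuousOn hU hxt hSF hScont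
  have hθ₀ : θ₀ ∈ U := mem_of_mem_nhds hU
  have hIcc : Set.uIcc (0:ℝ) T = Set.Icc 0 T := Set.uIcc_of_le hT.le
  have hIoc : ∀ t ∈ Set.uIoc (0:ℝ) T, t ∈ Set.Icc (0:ℝ) T := fun t ht => by
    rw [Set.uIoc_of_le hT.le] at ht; exact Set.Ioc_subset_Icc_self ht
  -- the derivative of the integrand with respect to the parameter
  let G : (Fin p → ℝ) → ℝ → ((Fin p → ℝ) →L[ℝ] ℝ) := fun θ t =>
    (fderiv ℝ (fun w : ℝ × (Fin p → ℝ) × (Fin n → ℝ) => l w.1 w.2.1 w.2.2) (t, θ, x θ t)).comp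
      ((0 : (Fin p → ℝ) →L[ℝ] ℝ).prod ((ContinuousLinearMap.id ℝ _).prod (matCLM (S θ t))))
  have hGapp : ∀ θ t v, G θ t v
      = Dθl t θ (x θ t) ⬝ᵥ v + Dxl t θ (x θ t) ⬝ᵥ (S θ t *ᵥ v) := fun θ t v =>
    fderiv_apply_eq_dotProduct hl hDxl hDθl t θ v (x θ t) (S θ t *ᵥ v)
  have hGc : ContinuousOn (fun w : (Fin p → ℝ) × ℝ => G w.1 w.2)
      (Metric.closedBall θ₀ ε ×ˢ Set.Icc (0:ℝ) T) := by
    refine ContinuousOn.clm_comp ((hl.continuous_fderiv (by simp)).comp_continuousOn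
      (continuousOn_snd.prodMk (continuousOn_fst.prodMk hxc))) ?_
    refine continuousOn_clm_apply.2 fun v => continuousOn_const.prodMk
      (continuousOn_const.prodMk ?_)
    exact (continuous_matCLM.comp_continuousOn
      (hScont.mono (Set.prod_mono_left hεU))).clm_apply continuousOn_const
  obtain ⟨C, hC⟩ := ((isCompact_closedBall θ₀ ε).prod
    (isCompact_Icc (a := (0:ℝ)) (b := T))).exists_bound_of_continuousOn hGc
  have hline : ∀ θ : Fin p → ℝ, ContinuousOn (fun t : ℝ => (θ, t)) (Set.Icc 0 T) := fun θ =>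
    continuousOn_const.prodMk continuousOn_id
  have hlc : ∀ θ ∈ U, ContinuousOn (fun t => l t θ (x θ t)) (Set.uIcc 0 T) := fun θ hθ => by
    rw [hIcc]
    exact hl.continuous.comp_continuousOn
      (continuousOn_id.prodMk (continuousOn_const.prodMk (hxt θ hθ)))
  have hG0 : ContinuousOn (G θ₀) (Set.uIcc 0 T) := by
    rw [hIcc]
    exact hGc.comp (hline θ₀) fun t ht => ⟨Metric.mem_closedBall_self hε.le, ht⟩
  have hint : HasFDerivAt (fun θ => ∫ τ in (0:ℝ)..T, l τ θ (x θ τ))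
      (∫ τ in (0:ℝ)..T, G θ₀ τ) θ₀ := by
    refine (intervalIntegral.hasFDerivAt_integral_of_dominated_of_fderiv_le
      (F := fun θ τ => l τ θ (x θ τ)) (F' := G) (bound := fun _ => C)
      (Metric.closedBall_mem_nhds θ₀ hε) ?_ (hlc θ₀ hθ₀).intervalIntegrable
      hG0.intervalIntegrable.def'.aestronglyMeasurable ?_ (by simp) ?_)
    · filter_upwards [hU] with θ hθ
      exact (hlc θ hθ).intervalIntegrable.def'.aestronglyMeasurable
    · exact Filter.Eventually.of_forall fun t ht θ hθ => hC (θ, t) ⟨hθ, hIoc t ht⟩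
    · exact Filter.Eventually.of_forall fun t ht θ hθ =>
        hasFDerivAt_along hl (hSF θ (hεU hθ) t (hIoc t ht)) t
  have hTT : T ∈ Set.Icc (0:ℝ) T := ⟨hT.le, le_rfl⟩
  have hmain := hint.fun_add (hasFDerivAt_along hL (hSF θ₀ hθ₀ T hTT) T)
  rw [← hℓ] at hmain
  refine ⟨hmain.differentiableAt, fun v => ?_⟩
  rw [hmain.fderiv, _root_.add_apply,
    ContinuousLinearMap.intervalIntegral_apply hG0.intervalIntegrable]
  have hLapp := fderiv_apply_eq_dotProduct hL hDxL hDθL T θ₀ v (x θ₀ T) (S θ₀ T *ᵥ v)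
  have hx0 : ContinuousOn (x θ₀) (Set.uIcc 0 T) := hIcc ▸ hxt θ₀ hθ₀
  have hlam_c : ContinuousOn lam (Set.uIcc 0 T) := fun t ht =>
    (hlam t (hIcc ▸ ht)).continuousAt.continuousWithinAt
  have hS_c : ContinuousOn (S θ₀) (Set.uIcc 0 T) := by
    rw [hIcc]
    exact hScont.comp (hline θ₀) fun t ht => ⟨hθ₀, ht⟩
  have hDxl_c : ContinuousOn (fun t => Dxl t θ₀ (x θ₀ t)) (Set.uIcc 0 T) := by
    have h : Continuous fun w : ℝ × (Fin p → ℝ) × (Fin n → ℝ) => Dxl w.1 w.2.1 w.2.2 :=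
      continuous_of_dotProduct fun v => by
        simp only [← hDxl]
        exact (continuous_fderiv_apply_const hl (0, 0, v)).congr fun w =>
          (fderiv_slot_last hl w.1 w.2.1 w.2.2 v).symm
    exact h.comp_continuousOn (continuousOn_id.prodMk (continuousOn_const.prodMk hx0))
  have hDθl_c : ContinuousOn (fun t => Dθl t θ₀ (x θ₀ t)) (Set.uIcc 0 T) := by
    have h : Continuous fun w : ℝ × (Fin p → ℝ) × (Fin n → ℝ) => Dθl w.1 w.2.1 w.2.2 :=
      continuous_of_dotProduct fun v => by
        simp only [← hDθl]
        exact (continuous_fderiv_apply_const hl (0, v, 0)).congr fun w =>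
          (fderiv_slot_mid hl w.1 w.2.1 w.2.2 v).symm
    exact h.comp_continuousOn (continuousOn_id.prodMk (continuousOn_const.prodMk hx0))
  have hDθf_c : ContinuousOn (fun t => Dθf θ₀ t (x θ₀ t)) (Set.uIcc 0 T) := by
    have h : Continuous fun w : (Fin p → ℝ) × ℝ × (Fin n → ℝ) => Dθf w.1 w.2.1 w.2.2 :=
      continuous_of_mulVec fun v => by
        simp only [← hDθf]
        exact (continuous_fderiv_apply_const hf (v, 0, 0)).congr fun w =>
          (fderiv_slot_fst hf w.1 w.2.1 w.2.2 v).symm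
    exact h.comp_continuousOn (continuousOn_const.prodMk (continuousOn_id.prodMk hx0))
  have hdot : ∀ {m : ℕ} {a b : ℝ → Fin m → ℝ}, ContinuousOn a (Set.uIcc 0 T) →
      ContinuousOn b (Set.uIcc 0 T) → ContinuousOn (fun t => a t ⬝ᵥ b t) (Set.uIcc 0 T) :=
    fun ha hb => (continuous_fst.dotProduct continuous_snd).comp_continuousOn (ha.prodMk hb)
  have hSv_c : ContinuousOn (fun t => S θ₀ t *ᵥ v) (Set.uIcc 0 T) :=
    (continuous_id.matrix_mulVec continuous_const).comp_continuousOn hS_c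
  have hgrad_c : ContinuousOn
      (fun t => lam t ᵥ* Dθf θ₀ t (x θ₀ t) + Dθl t θ₀ (x θ₀ t)) (Set.uIcc 0 T) :=
    ((continuous_fst.matrix_vecMul continuous_snd).comp_continuousOn
      (hlam_c.prodMk hDθf_c)).add hDθl_c
  -- along the adjoint, the pairing with the sensitivity no longer involves `D_x f`
  have hpair : ∀ t ∈ Set.uIcc (0:ℝ) T, HasDerivAt (fun t => lam t ⬝ᵥ (S θ₀ t *ᵥ v))
      ((lam t ᵥ* Dθf θ₀ t (x θ₀ t)) ⬝ᵥ v - Dxl t θ₀ (x θ₀ t) ⬝ᵥ (S θ₀ t *ᵥ v)) t := by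
    intro t ht
    rw [hIcc] at ht
    have hSv : ∀ i, HasDerivAt (fun s => (S θ₀ s *ᵥ v) i)
        (((Dxf θ₀ t (x θ₀ t) * S θ₀ t + Dθf θ₀ t (x θ₀ t)) *ᵥ v) i) t := fun i =>
      HasDerivAt.fun_sum (u := Finset.univ) fun j _ => (hSvar θ₀ hθ₀ t ht i j).mul_const (v j)
    have h := HasDerivAt.fun_sum (u := Finset.univ) fun i _ =>
      (hasDerivAt_pi.1 (hlam t ht) i).mul (hSv i)
    refine h.congr_deriv ?_
    rw [Finset.sum_add_distrib]
    change (-((Dxf θ₀ t (x θ₀ t))ᵀ *ᵥ lam t) - Dxl t θ₀ (x θ₀ t)) ⬝ᵥ (S θ₀ t *ᵥ v)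
      + lam t ⬝ᵥ ((Dxf θ₀ t (x θ₀ t) * S θ₀ t + Dθf θ₀ t (x θ₀ t)) *ᵥ v) = _
    rw [Matrix.add_mulVec, dotProduct_add, ← Matrix.mulVec_mulVec, sub_dotProduct,
      neg_dotProduct, Matrix.mulVec_transpose,
      Matrix.dotProduct_mulVec (lam t) (Dxf θ₀ t (x θ₀ t)),
      Matrix.dotProduct_mulVec (lam t) (Dθf θ₀ t (x θ₀ t))]
    ring
  have hgv_c : ContinuousOn (fun t => (lam t ᵥ* Dθf θ₀ t (x θ₀ t)) ⬝ᵥ v) (Set.uIcc 0 T) :=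
    hdot ((continuous_fst.matrix_vecMul continuous_snd).comp_continuousOn
      (hlam_c.prodMk hDθf_c)) continuousOn_const
  have hpair_c := hgv_c.fun_sub (hdot hDxl_c hSv_c)
  have hftc := intervalIntegral.integral_eq_sub_of_hasDerivAt hpair hpair_c.intervalIntegrable
  rw [hS0 θ₀ hθ₀, Matrix.zero_mulVec, dotProduct_zero, sub_zero, hlamT] at hftc
  have hswap : (∫ τ in (0:ℝ)..T, (lam τ ᵥ* Dθf θ₀ τ (x θ₀ τ) + Dθl τ θ₀ (x θ₀ τ))) ⬝ᵥ v
      = ∫ τ in (0:ℝ)..T, (lam τ ᵥ* Dθf θ₀ τ (x θ₀ τ) + Dθl τ θ₀ (x θ₀ τ)) ⬝ᵥ v := by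
    let φ : (Fin p → ℝ) →L[ℝ] ℝ := LinearMap.toContinuousLinearMap
      { toFun := fun u => u ⬝ᵥ v
        map_add' := fun a b => add_dotProduct a b v
        map_smul' := fun c a => smul_dotProduct c a v }
    exact (φ.intervalIntegral_comp_comm hgrad_c.intervalIntegrable).symm
  have hGv_c : ContinuousOn (fun t => G θ₀ t v) (Set.uIcc 0 T) :=
    hG0.clm_apply continuousOn_const
  rw [add_dotProduct, hswap]
  have hsum : (∫ τ in (0:ℝ)..T, G θ₀ τ v) + DxL T θ₀ (x θ₀ T) ⬝ᵥ (S θ₀ T *ᵥ v)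
      = ∫ τ in (0:ℝ)..T, (lam τ ᵥ* Dθf θ₀ τ (x θ₀ τ) + Dθl τ θ₀ (x θ₀ τ)) ⬝ᵥ v := by
    rw [← hftc, ← intervalIntegral.integral_add hGv_c.intervalIntegrable
      hpair_c.intervalIntegrable]
    refine intervalIntegral.integral_congr fun τ _ => ?_
    simp only [hGapp, add_dotProduct]
    ring
  rw [← hsum]
  refine (congrArg _ hLapp).trans ?_
  ring
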